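/- Let X be a compact metric space, f : X → X continuous surjective, and suppose X = ⋃_{i∈I} X_i where each X_i is closed and f(X_i) = X_i. Then h(f) = sup_{i∈I} h(f|_{X_i}). -/

import Mathlib

open Set Filter Dynamics SetRel UniformSpace
open scoped Uniformity Topology

/-- `F` is covered by at most `c` sets, any two points of each of which stay `U`-close
during `n` iterations of `f`. -/
def HasSmallDynCover {X : Type*} (f : X → X) (U : SetRel X X) (F : Set X) (n : ℕ) (c : ℝ) : Prop :=
  ∃ S : Finset (Set X), (S.card : ℝ) ≤ c ∧ F ⊆ ⋃₀ (S : Set (Set X)) ∧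
    ∀ A ∈ S, ∀ x ∈ A, ∀ y ∈ A, (x, y) ∈ dynEntourage f U n

namespace HasSmallDynCover

variable {X : Type*} {f : X → X} {U : SetRel X X} {F G : Set X} {m n : ℕ} {c d : ℝ}

lemma mono (h : HasSmallDynCover f U F n c) (hGF : G ⊆ F) (hmn : m ≤ n) (hcd : c ≤ d) :
    HasSmallDynCover f U G m d := by
  obtain ⟨S, hS, hF, hA⟩ := h
  exact ⟨S, hS.trans hcd, hGF.trans hF,
    fun A hAS x hx y hy ↦ dynEntourage_antitone f U hmn (hA A hAS x hx y hy)⟩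

lemma zero (F : Set X) (hc : 1 ≤ c) : HasSmallDynCover f U F 0 c :=
  ⟨{univ}, by simpa using hc, by simp, by simp⟩

lemma inter_preimage (hF : HasSmallDynCover f U F m c) (hG : HasSmallDynCover f U G n d) :
    HasSmallDynCover f U (F ∩ f^[m] ⁻¹' G) (m + n) (c * d) := by
  classical
  obtain ⟨S, hSc, hFS, hS⟩ := hF
  obtain ⟨R, hRc, hGR, hR⟩ := hG
  refine ⟨Finset.image₂ (fun A B ↦ A ∩ f^[m] ⁻¹' B) S R, ?_, ?_, ?_⟩
  · calc ((Finset.image₂ (fun A B ↦ A ∩ f^[m] ⁻¹' B) S R).card : ℝ)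
        ≤ S.card * R.card := mod_cast Finset.card_image₂_le _ _ _
      _ ≤ c * d := by gcongr; exact (Nat.cast_nonneg _).trans hSc
  · rintro x ⟨hxF, hxG⟩
    obtain ⟨A, hA, hxA⟩ := hFS hxF
    obtain ⟨B, hB, hxB⟩ := hGR hxG
    exact ⟨_, Finset.mem_coe.2 (Finset.mem_image₂_of_mem hA hB), hxA, hxB⟩
  · intro C hC x hx y hy
    obtain ⟨A, hA, B, hB, rfl⟩ := Finset.mem_image₂.1 hC
    refine mem_dynEntourage.2 fun k hk ↦ ?_
    rcases lt_or_ge k m with hkm | hmk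
    · exact mem_dynEntourage.1 (hS A hA x hx.1 y hy.1) k hkm
    · have := mem_dynEntourage.1 (hR B hB _ hx.2 _ hy.2) (k - m) (by omega)
      rwa [← Function.iterate_add_apply, ← Function.iterate_add_apply, Nat.sub_add_cancel hmk]
        at this

lemma biUnion {ι : Type*} {t : Finset ι} {E : ι → Set X} {c : ι → ℝ}
    (h : ∀ i ∈ t, HasSmallDynCover f U (E i) n (c i)) :
    HasSmallDynCover f U (⋃ i ∈ t, E i) n (∑ i ∈ t, c i) := by
  classical
  choose! S hSc hES hS using h
  refine ⟨t.biUnion S, ?_, ?_, ?_⟩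
  · calc ((t.biUnion S).card : ℝ) ≤ ∑ i ∈ t, ((S i).card : ℝ) := mod_cast Finset.card_biUnion_le
      _ ≤ ∑ i ∈ t, c i := Finset.sum_le_sum hSc
  · refine iUnion₂_subset fun i hi x hx ↦ ?_
    obtain ⟨A, hA, hxA⟩ := hES i hi hx
    exact ⟨A, Finset.mem_coe.2 (Finset.mem_biUnion.2 ⟨i, hi, hA⟩), hxA⟩
  · intro A hA
    obtain ⟨i, hi, hAi⟩ := Finset.mem_biUnion.1 hA
    exact hS i hi A hAi

lemma pow (h : HasSmallDynCover f U F n c) (q : ℕ) :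
    HasSmallDynCover f U (⋂ j < q, f^[n * j] ⁻¹' F) (n * q) (c ^ q) := by
  induction q with
  | zero => exact zero _ (by simp)
  | succ q ih =>
    refine (h.inter_preimage ih).mono (fun x hx ↦ ?_) (by rw [Nat.mul_succ, Nat.add_comm])
      (pow_succ' c q).ge
    simp only [mem_iInter, Set.mem_preimage] at hx
    refine ⟨by simpa using hx 0 (by omega), ?_⟩
    simp only [mem_iInter, Set.mem_preimage]
    intro j hj
    rw [← Function.iterate_add_apply, ← Nat.mul_succ]
    exact hx (j + 1) (by omega)

lemma coverMincard_le (h : HasSmallDynCover f U F n c) :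
    (coverMincard f F U n : ENNReal) ≤ ENNReal.ofReal c := by
  classical
  obtain ⟨S, hSc, hFS, hS⟩ := h
  rcases F.eq_empty_or_nonempty with rfl | ⟨x₀, -⟩
  · simp
  have : ∀ A : Set X, ∃ a, A.Nonempty → a ∈ A := fun A ↦ by
    by_cases hA : A.Nonempty
    · exact ⟨hA.some, fun _ ↦ hA.some_mem⟩
    · exact ⟨x₀, fun h ↦ (hA h).elim⟩
  choose p hp using this
  have hcov : IsDynCoverOf f F U n (S.image p : Finset X) := by
    intro x hx
    obtain ⟨A, hA, hxA⟩ := hFS hx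
    exact ⟨p A, by simpa using ⟨A, hA, rfl⟩, hS A hA x hxA _ (hp A ⟨x, hxA⟩)⟩
  calc (coverMincard f F U n : ENNReal) ≤ ((S.image p).card : ENNReal) := by
        exact_mod_cast ENat.toENNReal_mono hcov.coverMincard_le_card
    _ ≤ (S.card : ENNReal) := mod_cast Finset.card_image_le
    _ = ENNReal.ofReal S.card := (ENNReal.ofReal_natCast _).symm
    _ ≤ ENNReal.ofReal c := ENNReal.ofReal_le_ofReal hSc

/-- If a space is covered by pieces `E i` which, for `T i` iterations, are covered by `c i` small
sets, and `∑ c i * exp (- s * T i) ≤ 1`, then the covering numbers grow at rate at most `s`. -/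
lemma exists_of_sum_exp_le_one {ι : Type*} {t : Finset ι} {E : ι → Set X} {T : ι → ℕ}
    {c : ι → ℝ} {s : ℝ} (hs : 0 ≤ s) (hE : univ ⊆ ⋃ i ∈ t, E i) (hT : ∀ i ∈ t, 0 < T i)
    (h : ∀ i ∈ t, HasSmallDynCover f U (E i) (T i) (c i))
    (hsum : ∑ i ∈ t, c i * Real.exp (-(s * T i)) ≤ 1) :
    ∃ M : ℕ, ∀ n : ℕ, HasSmallDynCover f U univ n (Real.exp (s * (n + M))) := by
  refine ⟨t.sup T, fun n ↦ ?_⟩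
  induction n using Nat.strong_induction_on with
  | _ n ih =>
    rcases n.eq_zero_or_pos with rfl | hn
    · exact zero _ (Real.one_le_exp (by positivity))
    have step : ∀ i ∈ t, HasSmallDynCover f U (E i) n
        (c i * Real.exp (-(s * T i)) * Real.exp (s * (n + t.sup T))) := by
      intro i hi
      have hc : 0 ≤ c i := by
        obtain ⟨S, hS, -⟩ := h i hi
        exact (Nat.cast_nonneg _).trans hS
      have htail : HasSmallDynCover f U univ (n - T i)
          (Real.exp (s * (n + t.sup T) - s * T i)) := by
        have hM : (T i : ℝ) ≤ t.sup T := mod_cast Finset.le_sup (f := T) hi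
        rcases le_or_gt n (T i) with hnT | hnT
        · rw [Nat.sub_eq_zero_of_le hnT]
          refine zero _ (Real.one_le_exp ?_)
          have : (0 : ℝ) ≤ n := Nat.cast_nonneg n
          nlinarith
        · refine (ih (n - T i) (by have := hT i hi; omega)).mono subset_rfl le_rfl ?_
          rw [Nat.cast_sub hnT.le]
          apply le_of_eq
          congr 1
          ring
      refine ((h i hi).inter_preimage htail).mono (by simp) (by omega) (le_of_eq ?_)
      rw [mul_assoc, ← Real.exp_add]
      congr 2
      ring
    refine (biUnion step).mono hE le_rfl ?_
    rw [← Finset.sum_mul]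
    exact mul_le_of_le_one_left (Real.exp_pos _).le hsum

lemma coverEntropyEntourage_le {s : ℝ} {M : ℕ}
    (h : ∀ n : ℕ, HasSmallDynCover f U F n (Real.exp (s * (n + M)))) :
    coverEntropyEntourage f F U ≤ s := by
  rw [← ExpGrowth.expGrowthSup_exp (a := (s : EReal))]
  refine ExpGrowth.expGrowthSup_le_of_eventually_le (b := ENNReal.ofReal (Real.exp (s * M)))
    ENNReal.ofReal_ne_top (Eventually.of_forall fun n ↦ ?_)
  refine (h n).coverMincard_le.trans (le_of_eq ?_)
  have : (s : EReal) * (n : EReal) = ((s * n : ℝ) : EReal) := by push_cast; rfl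
  rw [this, EReal.exp_coe, ← ENNReal.ofReal_mul (Real.exp_pos _).le, ← Real.exp_add]
  congr 2
  ring

end HasSmallDynCover

namespace Dynamics

variable {X : Type*} {f : X → X}

lemma exists_isDynCoverOf_of_coverEntropyEntourage_lt {F : Set X} {U : SetRel X X} {s : ℝ}
    (h : coverEntropyEntourage f F U < s) :
    ∃ n > 0, ∃ S : Finset X, IsDynCoverOf f F U n S ∧ (S.card : ℝ) ≤ Real.exp (s * n) := by
  obtain ⟨n, hn, hpos⟩ := ((eventually_lt_of_limsup_lt h).and (eventually_gt_atTop 0)).exists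
  have hlog : ENNReal.log (coverMincard f F U n) < ((s * n : ℝ) : EReal) := by
    rw [EReal.div_lt_iff (by exact_mod_cast hpos) (EReal.natCast_ne_top n)] at hn
    exact_mod_cast hn
  have hlt : (coverMincard f F U n : ENNReal) < ENNReal.ofReal (Real.exp (s * n)) := by
    rwa [← EReal.exp_coe, ← ENNReal.log_lt_log_iff, EReal.log_exp]
  have hfin : coverMincard f F U n < ⊤ := by
    have := hlt.trans ENNReal.ofReal_lt_top
    simpa using this
  obtain ⟨S, hS, hcard⟩ := (coverMincard_finite_iff f F U n).1 hfin
  refine ⟨n, hpos, S, hS, ?_⟩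
  rw [← hcard, ENat.toENNReal_coe, ← ENNReal.ofReal_natCast] at hlt
  exact ((ENNReal.ofReal_lt_ofReal_iff (Real.exp_pos _)).1 hlt).le

lemma exists_isOpen_hasSmallDynCover [UniformSpace X] (hf : Continuous f) {F : Set X}
    {V : SetRel X X} (hV : V ∈ 𝓤 X) {s : ℝ} (h : coverEntropy f F < s) :
    ∃ n > 0, ∃ G, IsOpen G ∧ F ⊆ G ∧ HasSmallDynCover f V G n (Real.exp (s * n)) := by
  classical
  obtain ⟨W, hW, hWo, hWs, hWV⟩ := comp_open_symm_mem_uniformity_sets hV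
  obtain ⟨n, hn, S, hS, hcard⟩ := exists_isDynCoverOf_of_coverEntropyEntourage_lt
    ((coverEntropyEntourage_le_coverEntropy f F hW).trans_lt h)
  refine ⟨n, hn, ⋃ x ∈ S, ball x (dynEntourage f W n), ?_, ?_,
    S.image fun x ↦ ball x (dynEntourage f W n), ?_, ?_, ?_⟩
  · exact isOpen_biUnion fun x _ ↦ isOpen_ball x (isOpen.dynEntourage hf hWo n)
  · intro y hy
    obtain ⟨x, hx, hxy⟩ := hS hy
    exact mem_iUnion₂.2 ⟨x, hx, SetRel.symm (dynEntourage f W n) hxy⟩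
  · exact (Nat.cast_le.2 Finset.card_image_le).trans hcard
  · intro y hy
    obtain ⟨x, hx, hxy⟩ := mem_iUnion₂.1 hy
    exact ⟨_, Finset.mem_coe.2 (Finset.mem_image_of_mem _ hx), hxy⟩
  · intro A hA y hy z hz
    obtain ⟨x, -, rfl⟩ := Finset.mem_image.1 hA
    exact dynEntourage_monotone f n hWV (dynEntourage_comp_subset f W W n
      ⟨x, SetRel.symm (dynEntourage f W n) hy, hz⟩)

/-- If the entropies of the members of a (possibly infinite) cover by closed forward-invariant
sets are all less than `r`, then the entropy of the space at any scale is at most any `s > r`. -/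
lemma coverEntropyEntourage_univ_le_of_cover [UniformSpace X] [CompactSpace X]
    [SecondCountableTopology X] (hf : Continuous f) {I : Type*} {F : I → Set X}
    (hclosed : ∀ i, IsClosed (F i)) (hinv : ∀ i, MapsTo f (F i) (F i))
    (hcover : ⋃ i, F i = univ) {V : SetRel X X} (hV : V ∈ 𝓤 X) {r s : ℝ} (hr : 0 ≤ r)
    (hrs : r < s) (h : ∀ i, coverEntropy f (F i) < r) :
    coverEntropyEntourage f univ V ≤ s := by
  classical
  set D : Set (Set (Set X) × ℕ) := {p | (p.1.Finite ∧ p.1 ⊆ TopologicalSpace.countableBasis X) ∧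
    0 < p.2 ∧ HasSmallDynCover f V (⋃₀ p.1) p.2 (Real.exp (r * p.2))}
  have hDc : D.Countable :=
    ((countable_ofPred_finite_subset (TopologicalSpace.countable_countableBasis X)).prod
      (countable_univ (α := ℕ))).mono
        fun p (hp : p ∈ D) ↦ mem_prod.2 ⟨hp.1, mem_univ p.2⟩
  have hFD : ∀ i, ∃ p ∈ D, F i ⊆ ⋃₀ p.1 := fun i ↦ by
    obtain ⟨n, hn, G, hGo, hFG, hG⟩ := exists_isOpen_hasSmallDynCover hf hV (h i)
    obtain ⟨S, hS, rfl⟩ := (TopologicalSpace.isBasis_countableBasis X).open_eq_sUnion hGo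
    obtain ⟨R, hRS, hRf, hFR⟩ := (hclosed i).isCompact.elim_finite_subcover_image (b := S) (c := id)
      (fun A hA ↦ TopologicalSpace.isOpen_of_mem_countableBasis (hS hA))
      (by rwa [sUnion_eq_biUnion] at hFG)
    refine ⟨(R, n), ⟨⟨hRf, hRS.trans hS⟩, hn, hG.mono (sUnion_subset_sUnion hRS) le_rfl le_rfl⟩, ?_⟩
    rwa [sUnion_eq_biUnion]
  obtain ⟨ε, hε, hsum⟩ := hDc.exists_pos_forall_sum_le one_pos
  have hq : ∀ p : Set (Set X) × ℕ, ∃ q : ℕ, 0 < q ∧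
      (p ∈ D → Real.exp (-((s - r) * (p.2 * q : ℕ))) ≤ ε p) := fun p ↦ by
    have hlim : Tendsto (fun q : ℕ ↦ Real.exp (-((s - r) * q))) atTop (𝓝 0) :=
      Real.tendsto_exp_neg_atTop_nhds_zero.comp
        (tendsto_natCast_atTop_atTop.const_mul_atTop (sub_pos.2 hrs))
    obtain ⟨q, hq, hpos⟩ := ((hlim.eventually (gt_mem_nhds (hε p))).and
      (eventually_gt_atTop 0)).exists
    refine ⟨q, hpos, fun hp ↦ le_trans (Real.exp_le_exp.2 (neg_le_neg ?_)) hq.le⟩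
    have : 0 ≤ s - r := (sub_pos.2 hrs).le
    gcongr
    exact Nat.le_mul_of_pos_left q hp.2.1
  choose q hqpos hqε using hq
  let E : Set (Set X) × ℕ → Set X := fun p ↦ ⋂ j < q p, f^[p.2 * j] ⁻¹' ⋃₀ p.1
  have hEo : ∀ p ∈ D, IsOpen (E p) := fun p hp ↦
    (finite_Iio (q p)).isOpen_biInter fun j _ ↦ (isOpen_sUnion fun A hA ↦
      TopologicalSpace.isOpen_of_mem_countableBasis (hp.1.2 hA)).preimage (hf.iterate _)
  obtain ⟨t, htD, htf, ht⟩ := isCompact_univ.elim_finite_subcover_image (b := D) (c := E) hEo <| by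
    rw [← hcover]
    refine iUnion_subset fun i x hx ↦ ?_
    obtain ⟨p, hp, hFp⟩ := hFD i
    exact mem_iUnion₂.2 ⟨p, hp, mem_iInter₂.2 fun j _ ↦ hFp ((hinv i).iterate _ hx)⟩
  lift t to Finset (Set (Set X) × ℕ) using htf
  obtain ⟨M, hM⟩ := HasSmallDynCover.exists_of_sum_exp_le_one (f := f) (U := V) (t := t) (E := E)
    (T := fun p ↦ p.2 * q p) (c := fun p ↦ Real.exp (r * p.2) ^ q p) (hr.trans hrs.le)
    (by simpa using ht) (fun p hp ↦ Nat.mul_pos (htD hp).2.1 (hqpos p))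
    (fun p hp ↦ (htD hp).2.2.pow (q p)) <| by
      refine (Finset.sum_le_sum fun p hp ↦ ?_).trans (hsum t htD)
      refine le_trans (le_of_eq ?_) (hqε p (htD hp))
      rw [← Real.exp_nat_mul, ← Real.exp_add]
      congr 1
      push_cast
      ring
  exact HasSmallDynCover.coverEntropyEntourage_le hM

end Dynamics


theorem entropy_sup_of_invariant_closed_cover
    {X : Type*} [MetricSpace X] [CompactSpace X] {I : Type*} [Nonempty I]
    (f : X → X) (hf : Continuous f) (hfs : Function.Surjective f)
    (Xs : I → Set X) (hclosed : ∀ i, IsClosed (Xs i))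
    (hinv : ∀ i, f '' Xs i = Xs i) (hcover : ⋃ i, Xs i = Set.univ) :
    Dynamics.coverEntropy f (Set.univ : Set X) =
      ⨆ i, Dynamics.coverEntropy f (Xs i) := by
  refine le_antisymm ?_ (iSup_le fun i ↦ coverEntropy_monotone f (subset_univ _))
  rcases isEmpty_or_nonempty X with hX | ⟨⟨x⟩⟩
  · simp [univ_eq_empty_iff.2 hX]
  refine EReal.le_of_forall_lt_iff_le.1 fun s hs ↦ ?_
  obtain ⟨r, hr, hrs⟩ := EReal.lt_iff_exists_real_btwn.1 hs
  have hlt : ∀ i, coverEntropy f (Xs i) < r := fun i ↦ (le_iSup _ i).trans_lt hr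
  have hr0 : 0 ≤ r := by
    obtain ⟨i, hi⟩ := mem_iUnion.1 (hcover ▸ mem_univ x : x ∈ ⋃ i, Xs i)
    exact_mod_cast ((coverEntropy_nonneg f ⟨x, hi⟩).trans_lt (hlt i)).le
  exact iSup₂_le fun V hV ↦ coverEntropyEntourage_univ_le_of_cover hf hclosed
    (fun i ↦ mapsTo_iff_image_subset.2 (hinv i).subset) hcover hV hr0 (mod_cast hrs) hlt
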